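/- Consider the system P(z,z,w) = 0 and P(z,w,w) = 0 in (z,w) ∈ ℂ². If α₁, α₂, α₃ are vertices of an equilateral triangle (a² = 3b), then the solution set is exactly {(α₁,α₁), (α₂,α₂), (α₃,α₃)}. If α₁, α₂, α₃ are not vertices of an equilateral triangle, then the solution set is exactly {(α₁,α₁), (α₂,α₂), (α₃,α₃), (u*, v*), (v*, u*)}. -/

import Mathlib

/-!
The polarization `P` of a cubic `p` is symmetric and affine in each variable. If `z ≠ w` and
`P(z, z, w) = P(z, w, w) = 0`, the affine function `t ↦ P(z, w, t)` vanishes at the two points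
`z` and `w`, hence identically: `{z, w}` is *apolar* to `p`. Apolarity amounts to two linear
equations for `z + w` and `z * w` with determinant `(a² - 3b) / 9`. If `a² = 3b`, they are
consistent only when `p` is a perfect cube. Otherwise they determine `{z, w}`, namely as the zeros
of the Hessian `(a² - 3b) t² + (ab - 9c) t + (b² - 3ac)`, which are quotients of Lagrange resolvents
of the roots of `p`.
-/

theorem add_eq_add_and_mul_eq_mul_iff {R : Type*} [CommRing R] [NoZeroDivisors R] {z w u v : R} :
    z + w = u + v ∧ z * w = u * v ↔ z = u ∧ w = v ∨ z = v ∧ w = u := by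
  constructor
  · rintro ⟨hadd, hmul⟩
    have root : (z - u) * (z - v) = 0 := by linear_combination z * hadd - hmul
    rcases mul_eq_zero.1 root with hz | hz
    · exact .inl ⟨sub_eq_zero.1 hz, by linear_combination hadd - hz⟩
    · exact .inr ⟨sub_eq_zero.1 hz, by linear_combination hadd - hz⟩
  · rintro (⟨rfl, rfl⟩ | ⟨rfl, rfl⟩)
    · exact ⟨rfl, rfl⟩
    · exact ⟨add_comm _ _, mul_comm _ _⟩

section Polarization

variable {K : Type*} [Field K] {a b c u v z w x α₁ α₂ α₃ : K}

/-- The polarization of the monic cubic `X³ + a X² + b X + c`: the symmetric function of three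
variables, affine in each, that restricts to the cubic on the diagonal. It is meaningful only when
`3 ≠ 0` in `K`. -/
def cubicPolarization (a b c z₁ z₂ z₃ : K) : K :=
  z₁ * z₂ * z₃ + a / 3 * (z₁ * z₂ + z₂ * z₃ + z₃ * z₁) + b / 3 * (z₁ + z₂ + z₃) + c

/-- The pair `{z, w}` is apolar to the cubic `X³ + a X² + b X + c`: contracting the polarization
with `z` and `w` gives zero. -/
def IsApolarPair (a b c z w : K) : Prop :=
  ∀ t, cubicPolarization a b c z w t = 0

theorem cubicPolarization_right_comm (a b c z₁ z₂ z₃ : K) :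
    cubicPolarization a b c z₁ z₂ z₃ = cubicPolarization a b c z₁ z₃ z₂ := by
  unfold cubicPolarization; ring

theorem cubicPolarization_self (h3 : (3 : K) ≠ 0) (a b c z : K) :
    cubicPolarization a b c z z z = z ^ 3 + a * z ^ 2 + b * z + c := by
  unfold cubicPolarization; field_simp; ring

theorem cubicPolarization_eq_affine (a b c z w t : K) :
    cubicPolarization a b c z w t =
      (z * w + a / 3 * (z + w) + b / 3) * t + (a / 3 * (z * w) + b / 3 * (z + w) + c) := by
  unfold cubicPolarization; ring

theorem isApolarPair_iff_coeff :
    IsApolarPair a b c z w ↔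
      z * w + a / 3 * (z + w) + b / 3 = 0 ∧ a / 3 * (z * w) + b / 3 * (z + w) + c = 0 := by
  simp only [IsApolarPair, cubicPolarization_eq_affine]
  refine ⟨fun h => ?_, fun ⟨h₁, h₀⟩ t => by rw [h₁, h₀, zero_mul, zero_add]⟩
  exact ⟨by linear_combination h 1 - h 0, by linear_combination h 0⟩

theorem isApolarPair_of_ne (hzw : z ≠ w) (hz : cubicPolarization a b c z z w = 0)
    (hw : cubicPolarization a b c z w w = 0) : IsApolarPair a b c z w := by
  rw [cubicPolarization_right_comm, cubicPolarization_eq_affine] at hz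
  rw [cubicPolarization_eq_affine] at hw
  have slope_eq_zero : z * w + a / 3 * (z + w) + b / 3 = 0 :=
    mul_left_cancel₀ (sub_ne_zero.2 hzw) (by linear_combination hz - hw)
  exact isApolarPair_iff_coeff.2 ⟨slope_eq_zero, by linear_combination hz - z * slope_eq_zero⟩

theorem cubicPolarization_eq_zero_iff (h3 : (3 : K) ≠ 0) :
    cubicPolarization a b c z z w = 0 ∧ cubicPolarization a b c z w w = 0 ↔
      z = w ∧ z ^ 3 + a * z ^ 2 + b * z + c = 0 ∨ IsApolarPair a b c z w := by
  constructor
  · rintro ⟨hz, hw⟩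
    by_cases hzw : z = w
    · subst hzw
      exact .inl ⟨rfl, cubicPolarization_self h3 a b c z ▸ hz⟩
    · exact .inr (isApolarPair_of_ne hzw hz hw)
  · rintro (⟨rfl, hz⟩ | h)
    · simpa only [cubicPolarization_self h3, and_self] using hz
    · exact ⟨cubicPolarization_right_comm a b c z w z ▸ h z, h w⟩

theorem IsApolarPair.root_eq_of_sq_eq (h3 : (3 : K) ≠ 0) (h : IsApolarPair a b c z w)
    (hab : a ^ 2 = 3 * b) (hx : x ^ 3 + a * x ^ 2 + b * x + c = 0) : x = -a / 3 := by
  obtain ⟨h₁, h₀⟩ := isApolarPair_iff_coeff.1 h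
  field_simp at h₁ h₀
  have hc : 9 * c = a * b := by linear_combination 3 * h₀ - a * h₁ + (z + w) * hab
  have cube_eq_zero : (3 * x + a) ^ 3 = 0 := by
    linear_combination 27 * hx + (9 * x + a) * hab - 3 * hc
  rw [eq_div_iff h3]
  linear_combination pow_eq_zero_iff three_ne_zero |>.1 cube_eq_zero

theorem isApolarPair_iff_hessian (h3 : (3 : K) ≠ 0) (hab : a ^ 2 - 3 * b ≠ 0) :
    IsApolarPair a b c z w ↔
      (z + w) * (a ^ 2 - 3 * b) = 9 * c - a * b ∧ z * w * (a ^ 2 - 3 * b) = b ^ 2 - 3 * a * c := by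
  rw [isApolarPair_iff_coeff]
  field_simp
  constructor
  · rintro ⟨h₁, h₀⟩
    exact ⟨by linear_combination a * h₁ - 3 * h₀, by linear_combination a * h₀ - b * h₁⟩
  · rintro ⟨hadd, hmul⟩
    constructor <;> apply mul_left_cancel₀ hab
    · linear_combination 3 * hmul + a * hadd
    · linear_combination a * hmul + b * hadd

theorem IsApolarPair.iff_eq_or_eq_swap (h3 : (3 : K) ≠ 0) (hab : a ^ 2 - 3 * b ≠ 0)
    (huv : IsApolarPair a b c u v) :
    IsApolarPair a b c z w ↔ z = u ∧ w = v ∨ z = v ∧ w = u := by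
  obtain ⟨hadd, hmul⟩ := (isApolarPair_iff_hessian h3 hab).1 huv
  rw [isApolarPair_iff_hessian h3 hab, ← hadd, ← hmul, mul_left_inj' hab, mul_left_inj' hab,
    add_eq_add_and_mul_eq_mul_iff]

theorem setOf_cubicPolarization_eq_zero (h3 : (3 : K) ≠ 0)
    (hroots : ∀ z, z ^ 3 + a * z ^ 2 + b * z + c = (z - α₁) * (z - α₂) * (z - α₃)) :
    {p : K × K | cubicPolarization a b c p.1 p.1 p.2 = 0 ∧
        cubicPolarization a b c p.1 p.2 p.2 = 0} =
      {(α₁, α₁), (α₂, α₂), (α₃, α₃)} ∪ {p | IsApolarPair a b c p.1 p.2} := by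
  ext ⟨z, w⟩
  simp only [Set.mem_ofPred_eq, Set.mem_union, Set.mem_insert_iff, Set.mem_singleton_iff,
    Prod.mk.injEq, cubicPolarization_eq_zero_iff h3, hroots, mul_eq_zero, sub_eq_zero]
  grind

end Polarization

section LagrangeResolvent

variable {R : Type*} [CommRing R] {e₁ e₂ : R}

/-- The Lagrange resolvent of `x, y, z`, up to sign: when `e₁` and `e₂` are the two roots of
`X² - X + 1`, the weights `-e₁`, `-e₂`, `1` are the cube roots of unity. -/
def lagrangeResolvent (e₁ e₂ x y z : R) : R :=
  x * e₁ + y * e₂ - z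

theorem lagrangeResolvent_mul_swap (hadd : e₁ + e₂ = 1) (hmul : e₁ * e₂ = 1)
    (x y z : R) :
    lagrangeResolvent e₁ e₂ x y z * lagrangeResolvent e₂ e₁ x y z =
      (x + y + z) ^ 2 - 3 * (x * y + x * z + y * z) := by
  unfold lagrangeResolvent
  linear_combination (x * y * (e₁ + e₂ + 1) - (x + y) * z) * hadd + (x - y) ^ 2 * hmul

theorem lagrangeResolvent_mul_swap_add_swap_mul (hadd : e₁ + e₂ = 1) (hmul : e₁ * e₂ = 1)
    (x y z x' y' z' : R) :
    lagrangeResolvent e₁ e₂ x y z * lagrangeResolvent e₂ e₁ x' y' z' +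
        lagrangeResolvent e₂ e₁ x y z * lagrangeResolvent e₁ e₂ x' y' z' =
      3 * (x * x' + y * y' + z * z') - (x + y + z) * (x' + y' + z') := by
  unfold lagrangeResolvent
  linear_combination ((x * y' + y * x') * (e₁ + e₂ + 1) - (x + y) * z' - z * (x' + y')) * hadd +
    2 * (x - y) * (x' - y') * hmul

end LagrangeResolvent

section Roots

variable {K : Type*} [Field K] {α₁ α₂ α₃ e₁ e₂ e₃ a b c u v : K}

theorem isApolarPair_of_mul_lagrangeResolvent_eq (h3 : (3 : K) ≠ 0) (hadd : e₁ + e₂ = 1)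
    (hmul : e₁ * e₂ = 1) (ha : a = -(α₁ + α₂ + α₃)) (hb : b = α₁ * α₂ + α₁ * α₃ + α₂ * α₃)
    (hc : c = -(α₁ * α₂ * α₃)) (hab : a ^ 2 - 3 * b ≠ 0)
    (hu : u * lagrangeResolvent e₁ e₂ α₁ α₂ α₃ =
      -lagrangeResolvent e₁ e₂ (α₂ * α₃) (α₁ * α₃) (α₁ * α₂))
    (hv : v * lagrangeResolvent e₂ e₁ α₁ α₂ α₃ =
      -lagrangeResolvent e₂ e₁ (α₂ * α₃) (α₁ * α₃) (α₁ * α₂)) :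
    IsApolarPair a b c u v := by
  have norm_roots := lagrangeResolvent_mul_swap hadd hmul α₁ α₂ α₃
  have norm_products :=
    lagrangeResolvent_mul_swap hadd hmul (α₂ * α₃) (α₁ * α₃) (α₁ * α₂)
  have trace_products :=
    lagrangeResolvent_mul_swap_add_swap_mul hadd hmul (α₂ * α₃) (α₁ * α₃) (α₁ * α₂) α₁ α₂ α₃
  rw [isApolarPair_iff_hessian h3 hab]
  subst ha hb hc
  generalize lagrangeResolvent e₁ e₂ α₁ α₂ α₃ = D, lagrangeResolvent e₂ e₁ α₁ α₂ α₃ = D',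
    lagrangeResolvent e₁ e₂ (α₂ * α₃) (α₁ * α₃) (α₁ * α₂) = N,
    lagrangeResolvent e₂ e₁ (α₂ * α₃) (α₁ * α₃) (α₁ * α₂) = N' at *
  constructor
  · linear_combination D' * hu + D * hv - trace_products - (u + v) * norm_roots
  · linear_combination v * D' * hu - N * hv + norm_products - u * v * norm_roots

theorem stmt_11_general (h3 : (3 : K) ≠ 0) (hadd : e₁ + e₂ = 1) (hmul : e₁ * e₂ = 1)
    (he₃ : e₃ = -1) (h12 : α₁ ≠ α₂) (ha : a = -(α₁ + α₂ + α₃))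
    (hb : b = α₁ * α₂ + α₁ * α₃ + α₂ * α₃) (hc : c = -(α₁ * α₂ * α₃))
    (hu : u = -((α₁ * α₂ * e₃ + α₁ * α₃ * e₂ + α₂ * α₃ * e₁) /
      (α₁ * e₁ + α₂ * e₂ + α₃ * e₃)))
    (hv : v = -((α₁ * α₂ * e₃ + α₁ * α₃ * e₁ + α₂ * α₃ * e₂) /
      (α₁ * e₂ + α₂ * e₁ + α₃ * e₃))) :
    (a ^ 2 = 3 * b →
      {p : K × K | cubicPolarization a b c p.1 p.1 p.2 = 0 ∧
          cubicPolarization a b c p.1 p.2 p.2 = 0} =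
        {(α₁, α₁), (α₂, α₂), (α₃, α₃)}) ∧
    (α₁ * e₁ + α₂ * e₂ + α₃ * e₃ ≠ 0 → α₁ * e₂ + α₂ * e₁ + α₃ * e₃ ≠ 0 →
      {p : K × K | cubicPolarization a b c p.1 p.1 p.2 = 0 ∧
          cubicPolarization a b c p.1 p.2 p.2 = 0} =
        {(α₁, α₁), (α₂, α₂), (α₃, α₃), (u, v), (v, u)}) := by
  have hroots (z : K) : z ^ 3 + a * z ^ 2 + b * z + c = (z - α₁) * (z - α₂) * (z - α₃) := by
    rw [ha, hb, hc]; ring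
  have denom (f₁ f₂ : K) : α₁ * f₁ + α₂ * f₂ + α₃ * e₃ = lagrangeResolvent f₁ f₂ α₁ α₂ α₃ := by
    rw [he₃, lagrangeResolvent]; ring
  have num (f₁ f₂ : K) : α₁ * α₂ * e₃ + α₁ * α₃ * f₂ + α₂ * α₃ * f₁ =
      lagrangeResolvent f₁ f₂ (α₂ * α₃) (α₁ * α₃) (α₁ * α₂) := by
    rw [he₃, lagrangeResolvent]; ring
  rw [setOf_cubicPolarization_eq_zero h3 hroots]
  simp only [denom, num] at hu hv ⊢
  refine ⟨fun hab => ?_, fun hD hD' => ?_⟩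
  · refine Set.union_eq_left.2 fun p hp => absurd ?_ h12
    have root_eq {x : K} (hx : (x - α₁) * (x - α₂) * (x - α₃) = 0) : x = -a / 3 :=
      IsApolarPair.root_eq_of_sq_eq h3 hp hab ((hroots x).trans hx)
    exact (root_eq (by ring)).trans (root_eq (by ring)).symm
  · have hab : a ^ 2 - 3 * b ≠ 0 := by
      rw [ha, hb, neg_sq, ← lagrangeResolvent_mul_swap hadd hmul]
      exact mul_ne_zero hD hD'
    have huv : IsApolarPair a b c u v :=
      isApolarPair_of_mul_lagrangeResolvent_eq h3 hadd hmul ha hb hc hab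
        (by rw [hu, neg_mul, div_mul_cancel₀ _ hD]) (by rw [hv, neg_mul, div_mul_cancel₀ _ hD'])
    ext ⟨z, w⟩
    simp only [Set.mem_union, Set.mem_insert_iff, Set.mem_singleton_iff, Set.mem_ofPred_eq,
      Prod.mk.injEq, huv.iff_eq_or_eq_swap h3 hab, or_assoc]

end Roots

theorem exp_neg_pi_div_three_mul_I_add_exp_pi_div_three_mul_I :
    Complex.exp (-(Real.pi : ℂ) / 3 * Complex.I) + Complex.exp ((Real.pi : ℂ) / 3 * Complex.I) =
      1 := by
  have cos_pi_div_three : Complex.cos ((Real.pi : ℂ) / 3) = 1 / 2 := by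
    rw [← Complex.ofReal_ofNat, ← Complex.ofReal_div, ← Complex.ofReal_cos, Real.cos_pi_div_three]
    norm_num
  rw [add_comm, neg_div, ← Complex.two_cos, cos_pi_div_three, mul_one_div_cancel two_ne_zero]

theorem exp_neg_pi_div_three_mul_I_mul_exp_pi_div_three_mul_I :
    Complex.exp (-(Real.pi : ℂ) / 3 * Complex.I) * Complex.exp ((Real.pi : ℂ) / 3 * Complex.I) =
      1 := by
  rw [← Complex.exp_add, neg_div, neg_mul, neg_add_cancel, Complex.exp_zero]

theorem stmt_11 (α₁ α₂ α₃ e₁ e₂ e₃ a b c u v : ℂ) (P : ℂ → ℂ → ℂ → ℂ)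
    (he₁ : e₁ = Complex.exp (-(Real.pi : ℂ) / 3 * Complex.I))
    (he₂ : e₂ = Complex.exp ((Real.pi : ℂ) / 3 * Complex.I))
    (he₃ : e₃ = -1)
    (h12 : α₁ ≠ α₂) (h13 : α₁ ≠ α₃) (h23 : α₂ ≠ α₃)
    (ha : a = -(α₁ + α₂ + α₃))
    (hb : b = α₁ * α₂ + α₁ * α₃ + α₂ * α₃)
    (hc : c = -(α₁ * α₂ * α₃))
    (hP : ∀ z₁ z₂ z₃, P z₁ z₂ z₃ =
      z₁ * z₂ * z₃ + a / 3 * (z₁ * z₂ + z₂ * z₃ + z₃ * z₁) + b / 3 * (z₁ + z₂ + z₃) + c)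
    (hu : u = -((α₁ * α₂ * e₃ + α₁ * α₃ * e₂ + α₂ * α₃ * e₁) /
      (α₁ * e₁ + α₂ * e₂ + α₃ * e₃)))
    (hv : v = -((α₁ * α₂ * e₃ + α₁ * α₃ * e₁ + α₂ * α₃ * e₂) /
      (α₁ * e₂ + α₂ * e₁ + α₃ * e₃))) :
    (a ^ 2 = 3 * b →
      {p : ℂ × ℂ | P p.1 p.1 p.2 = 0 ∧ P p.1 p.2 p.2 = 0} =
        {(α₁, α₁), (α₂, α₂), (α₃, α₃)}) ∧
    (α₁ * e₁ + α₂ * e₂ + α₃ * e₃ ≠ 0 → α₁ * e₂ + α₂ * e₁ + α₃ * e₃ ≠ 0 →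
      {p : ℂ × ℂ | P p.1 p.1 p.2 = 0 ∧ P p.1 p.2 p.2 = 0} =
        {(α₁, α₁), (α₂, α₂), (α₃, α₃), (u, v), (v, u)}) := by
  obtain rfl : P = cubicPolarization a b c := by
    funext z₁ z₂ z₃
    exact hP z₁ z₂ z₃
  subst he₁ he₂
  exact stmt_11_general three_ne_zero exp_neg_pi_div_three_mul_I_add_exp_pi_div_three_mul_I
    exp_neg_pi_div_three_mul_I_mul_exp_pi_div_three_mul_I he₃ h12 ha hb hc hu hv
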